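/- Let α ∈ (0,1) and let u : closure(B_1^+) → ℝ be continuous and a-harmonic in B_1^+. Assume for some point (x₀,y₀) ∈ (∂B_1)^+ and some C₀ ≥ 0 that |u(x₀,y₀) − u(x,y)| ≤ C₀ (|x−x₀|² + (y−y₀)²)^{α/2} for every (x,y) ∈ ∂B_1^+ = B_1^0 ∪ (∂B_1)^+. Then there is a constant C depending only on s, n and α such that |u(x₀,y₀) − u(x,y)| ≤ C C₀ (|x−x₀|² + (y−y₀)²)^{α/2} for all (x,y) ∈ B_1^+. -/

import Mathlib

open Set Filter Topology MeasureTheory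
open scoped RealInnerProductSpace

noncomputable section

abbrev En (n : ℕ) := EuclideanSpace ℝ (Fin n)

/-- The open upper half ball `B_r^+`. -/
def halfBall (n : ℕ) (r : ℝ) : Set (En n × ℝ) :=
  {p | ‖p.1‖ ^ 2 + p.2 ^ 2 < r ^ 2 ∧ 0 < p.2}

/-- The closure of the upper half ball. -/
def closedHalfBall (n : ℕ) (r : ℝ) : Set (En n × ℝ) :=
  {p | ‖p.1‖ ^ 2 + p.2 ^ 2 ≤ r ^ 2 ∧ 0 ≤ p.2}

/-- `B_r^+ ∪ B_r^0`. -/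
def halfBallWithBase (n : ℕ) (r : ℝ) : Set (En n × ℝ) :=
  {p | ‖p.1‖ ^ 2 + p.2 ^ 2 < r ^ 2 ∧ 0 ≤ p.2}

/-- The flat ball `B_r^0` in `ℝⁿ`. -/
def flatBall (n : ℕ) (r : ℝ) : Set (En n) := {x | ‖x‖ < r}

/-- `(∂B_1)^+`. -/
def spherePlus (n : ℕ) : Set (En n × ℝ) := {p | ‖p.1‖ ^ 2 + p.2 ^ 2 = 1 ∧ 0 < p.2}

/-- closure of `(∂B_1)^+`. -/
def closedSpherePlus (n : ℕ) : Set (En n × ℝ) := {p | ‖p.1‖ ^ 2 + p.2 ^ 2 = 1 ∧ 0 ≤ p.2}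

/-- Second directional derivative of `u` at `p` in direction `v`. -/
def D2 {n : ℕ} (u : En n × ℝ → ℝ) (p v : En n × ℝ) : ℝ :=
  fderiv ℝ (fun q => fderiv ℝ u q v) p v

/-- The Laplacian in the `n+1` variables `(x, y)`. -/
def lap {n : ℕ} (u : En n × ℝ → ℝ) (p : En n × ℝ) : ℝ :=
  (∑ i : Fin n, D2 u p (EuclideanSpace.single i 1, 0)) + D2 u p (0, 1)

/-- `u` is `a`-harmonic on `Ω`: it is `C²` there and `Δu + (a/y) ∂_y u = 0`. -/
def IsAHarmonicOn {n : ℕ} (a : ℝ) (u : En n × ℝ → ℝ) (Ω : Set (En n × ℝ)) : Prop :=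
  ContDiffOn ℝ 2 u Ω ∧ ∀ p ∈ Ω, lap u p + (a / p.2) * fderiv ℝ u p (0, 1) = 0

/-- `lim_{y → 0⁺} y^a ∂_y w(x, y) = L`. -/
def NormalDerivLimit {n : ℕ} (a : ℝ) (w : En n × ℝ → ℝ) (x : En n) (L : ℝ) : Prop :=
  Tendsto (fun y : ℝ => y ^ a * fderiv ℝ w (x, y) (0, 1)) (𝓝[>] (0 : ℝ)) (𝓝 L)

/-- The boundary-restriction `(t, x) ↦ u(t, x, 0)`. -/
def bdryFun {n : ℕ} (u : ℝ → En n × ℝ → ℝ) : ℝ × En n → ℝ := fun q => u q.1 (q.2, 0)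

/-- A classical solution of the extended drift–diffusion equation on
`[-1,0] × closure (B_1^+)` with drift `b` and right-hand side `f`. -/
def IsExtDDSolution {n : ℕ} (a : ℝ) (b : ℝ → En n → En n) (f : ℝ → En n → ℝ)
    (u : ℝ → En n × ℝ → ℝ) : Prop :=
  ContinuousOn (fun q : ℝ × (En n × ℝ) => u q.1 q.2) (Icc (-1 : ℝ) 0 ×ˢ closedHalfBall n 1) ∧
  (∀ t ∈ Icc (-1 : ℝ) 0, IsAHarmonicOn a (u t) (halfBall n 1)) ∧
  (∀ q ∈ Ioc (-1 : ℝ) 0 ×ˢ flatBall n 1,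
      DifferentiableWithinAt ℝ (bdryFun u) (Ioc (-1 : ℝ) 0 ×ˢ flatBall n 1) q) ∧
  (∀ t x, (t, x) ∈ Ioc (-1 : ℝ) 0 ×ˢ flatBall n 1 →
      ∃ L : ℝ, NormalDerivLimit a (u t) x L ∧
        fderivWithin ℝ (bdryFun u) (Ioc (-1 : ℝ) 0 ×ˢ flatBall n 1) (t, x) (1, 0) +
          fderivWithin ℝ (bdryFun u) (Ioc (-1 : ℝ) 0 ×ˢ flatBall n 1) (t, x) (0, b t x) -
          L = f t x)

/-- A classical solution of the localized fractional heat equation on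
`[-1,0] × closure (B_1^+)`. -/
def IsFracHeatSolution {n : ℕ} (a : ℝ) (u : ℝ → En n × ℝ → ℝ) : Prop :=
  ContinuousOn (fun q : ℝ × (En n × ℝ) => u q.1 q.2) (Icc (-1 : ℝ) 0 ×ˢ closedHalfBall n 1) ∧
  (∀ t ∈ Icc (-1 : ℝ) 0, IsAHarmonicOn a (u t) (halfBall n 1)) ∧
  (∀ t ∈ Ioc (-1 : ℝ) 0, ∀ x ∈ flatBall n 1,
      DifferentiableWithinAt ℝ (fun τ => u τ (x, 0)) (Ioc (-1 : ℝ) 0) t ∧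
      NormalDerivLimit a (u t) x (derivWithin (fun τ => u τ (x, 0)) (Ioc (-1 : ℝ) 0) t))

/-!
The function `φ(X) = |X - P|^α + M (1 - X · P)^α` is a barrier at a boundary point `P`. Here
`1 - X · P` is the distance from `X` to the tangent plane of the unit sphere at `P`; it is at most
`|X - P|`, so `φ` is comparable to `|X - P|^α`. Applied to the first term, the operator
`Δ + (a/y) ∂_y` gives at most a multiple of `|X - P|^{α-2}`, which the strictly negative
contribution `-M α (1 - α) (1 - X · P)^{α-2}` of the second term absorbs once `M (1 - α) ≥ n + a`.
The part of the drift that is singular at `y = 0` is nonpositive, as `a ≥ 0` and `P` has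
nonnegative height. Comparing `±(u - u(P))` with `C₀ φ` through the maximum principle gives the
estimate.
-/

/-- The degenerate elliptic operator `Δ + (a/y) ∂_y = y^{-a} div(y^a ∇ ·)`, meaningful for
`y ≠ 0`. -/
def aLap {n : ℕ} (a : ℝ) (u : En n × ℝ → ℝ) (p : En n × ℝ) : ℝ :=
  lap u p + (a / p.2) * fderiv ℝ u p (0, 1)

/-- The squared Euclidean length of the gradient in the variables `(x, y)`; the norm of
`fderiv ℝ u p` is not used because `En n × ℝ` carries the sup norm. -/
def gradSq {n : ℕ} (u : En n × ℝ → ℝ) (p : En n × ℝ) : ℝ :=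
  (∑ i : Fin n, fderiv ℝ u p (EuclideanSpace.single i 1, 0) ^ 2) + fderiv ℝ u p (0, 1) ^ 2

/-- The squared Euclidean distance from `p` to `P` (`dist` on `En n × ℝ` is the sup distance). -/
def distSq {n : ℕ} (P p : En n × ℝ) : ℝ := ‖p.1 - P.1‖ ^ 2 + (p.2 - P.2) ^ 2

/-- For a unit vector `P`, the signed distance from `p` to the hyperplane tangent to the unit
sphere at `P`, positive on the side of the origin. -/
def tangentDist {n : ℕ} (P p : En n × ℝ) : ℝ := 1 - (⟪p.1, P.1⟫ + p.2 * P.2)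

/-- The supersolution `|X - P|^α + M (1 - X · P)^α`, `M = (n + a) / (1 - α)`, that controls
`a`-harmonic functions near the boundary point `P`. -/
def barrier {n : ℕ} (a α : ℝ) (P p : En n × ℝ) : ℝ :=
  distSq P p ^ (α / 2) + (n + a) / (1 - α) * tangentDist P p ^ α

section HalfBall

variable {n : ℕ}

lemma isOpen_halfBall (r : ℝ) : IsOpen (halfBall n r) := by
  refine IsOpen.and (isOpen_lt ?_ ?_) (isOpen_lt ?_ ?_) <;> fun_prop

lemma isClosed_closedHalfBall (r : ℝ) : IsClosed (closedHalfBall n r) := by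
  refine IsClosed.and (isClosed_le ?_ ?_) (isClosed_le ?_ ?_) <;> fun_prop

lemma isCompact_closedHalfBall (r : ℝ) : IsCompact (closedHalfBall n r) := by
  refine (isCompact_closedBall (0 : En n × ℝ) |r|).of_isClosed_subset
    (isClosed_closedHalfBall r) fun p hp ↦ ?_
  rw [mem_closedBall_zero_iff, norm_prod_le_iff, ← abs_norm p.1, Real.norm_eq_abs]
  exact ⟨sq_le_sq.1 (by linarith [hp.1, sq_nonneg p.2]),
    sq_le_sq.1 (by linarith [hp.1, sq_nonneg ‖p.1‖])⟩

lemma halfBall_subset_closedHalfBall (r : ℝ) : halfBall n r ⊆ closedHalfBall n r :=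
  fun _ hp ↦ ⟨hp.1.le, hp.2.le⟩

lemma closure_flatBall_prod_union_spherePlus_subset :
    closure (flatBall n 1 ×ˢ {0} ∪ spherePlus n) ⊆ closedHalfBall n 1 := by
  refine closure_minimal ?_ (isClosed_closedHalfBall 1)
  rintro p (⟨hx, hy⟩ | ⟨h, hy⟩)
  · rw [mem_singleton_iff] at hy
    have hx : ‖p.1‖ ^ 2 < 1 := (sq_lt_one_iff₀ (norm_nonneg _)).2 hx
    exact ⟨by simpa [hy] using hx.le, hy.ge⟩
  · exact ⟨by simp [h], hy.le⟩

lemma closedHalfBall_diff_halfBall_subset_closure :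
    closedHalfBall n 1 \ halfBall n 1 ⊆ closure (flatBall n 1 ×ˢ {0} ∪ spherePlus n) := by
  rintro p ⟨⟨hp, hy⟩, hp'⟩
  rw [one_pow] at hp
  rcases hy.eq_or_lt with hy | hy
  · have hx : p.1 ∈ closure (flatBall n 1) := by
      have hflat : flatBall n 1 = Metric.ball 0 1 := by ext x; simp [flatBall]
      rw [hflat, closure_ball _ one_ne_zero, mem_closedBall_zero_iff]
      exact (sq_le_one_iff₀ (norm_nonneg _)).1 (by linarith [sq_nonneg p.2])
    refine closure_mono subset_union_left ?_
    rw [closure_prod_eq, closure_singleton]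
    exact ⟨hx, hy.symm⟩
  · have hp1 : 1 ≤ ‖p.1‖ ^ 2 + p.2 ^ 2 :=
      not_lt.1 fun h ↦ hp' ⟨by rwa [one_pow], hy⟩
    exact subset_closure (Or.inr ⟨hp.antisymm hp1, hy⟩)

end HalfBall

section Calculus

variable {n : ℕ} {a : ℝ} {f g : En n × ℝ → ℝ} {p : En n × ℝ}

lemma differentiableAt_fderiv_apply (hf : ContDiffAt ℝ 2 f p) (v : En n × ℝ) :
    DifferentiableAt ℝ (fun q ↦ fderiv ℝ f q v) p :=
  ((hf.fderiv_right (m := 1) (by norm_num)).differentiableAt (by norm_num)).clm_apply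
    (differentiableAt_const v)

lemma eventually_differentiableAt (hf : ContDiffAt ℝ 2 f p) :
    ∀ᶠ q in 𝓝 p, DifferentiableAt ℝ f q :=
  (hf.eventually (by norm_num)).mono fun _ hq ↦ hq.differentiableAt (by norm_num)

lemma fderiv_add_const_mul (hf : DifferentiableAt ℝ f p) (hg : DifferentiableAt ℝ g p) (c : ℝ) :
    fderiv ℝ (fun q ↦ f q + c * g q) p = fderiv ℝ f p + c • fderiv ℝ g p :=
  (hf.hasFDerivAt.add (hg.hasFDerivAt.const_mul c)).fderiv

lemma D2_add_const_mul (hf : ContDiffAt ℝ 2 f p) (hg : ContDiffAt ℝ 2 g p) (c : ℝ)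
    (v : En n × ℝ) : D2 (fun q ↦ f q + c * g q) p v = D2 f p v + c * D2 g p v := by
  have hfirst : (fun q ↦ fderiv ℝ (fun q ↦ f q + c * g q) q v) =ᶠ[𝓝 p]
      fun q ↦ fderiv ℝ f q v + c * fderiv ℝ g q v := by
    filter_upwards [eventually_differentiableAt hf, eventually_differentiableAt hg] with q hfq hgq
    simp [fderiv_add_const_mul hfq hgq]
  rw [D2, hfirst.fderiv_eq, fderiv_add_const_mul (differentiableAt_fderiv_apply hf v)
    (differentiableAt_fderiv_apply hg v)]
  simp [D2]

lemma aLap_add_const_mul (hf : ContDiffAt ℝ 2 f p) (hg : ContDiffAt ℝ 2 g p) (c : ℝ) :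
    aLap a (fun q ↦ f q + c * g q) p = aLap a f p + c * aLap a g p := by
  have hfirst := fderiv_add_const_mul (hf.differentiableAt (by norm_num))
    (hg.differentiableAt (by norm_num)) c
  simp only [aLap, lap, D2_add_const_mul hf hg, hfirst, Finset.sum_add_distrib, ← Finset.mul_sum,
    add_apply, smul_apply, smul_eq_mul]
  ring

lemma aLap_sub_const (f : En n × ℝ → ℝ) (c : ℝ) :
    aLap a (fun q ↦ f q - c) p = aLap a f p := by
  simp [aLap, lap, D2, fderiv_sub_const]

lemma aLap_const_sub (c : ℝ) (f : En n × ℝ → ℝ) :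
    aLap a (fun q ↦ c - f q) p = -aLap a f p := by
  simp only [aLap, lap, D2, fderiv_const_sub, neg_apply, fderiv_fun_neg, Finset.sum_neg_distrib,
    mul_neg, neg_add_rev]
  ring

lemma D2_comp {φ φ' : ℝ → ℝ} {φ'' : ℝ} (hg : ContDiffAt ℝ 2 g p)
    (hφ : ∀ᶠ t in 𝓝 (g p), HasDerivAt φ (φ' t) t) (hφ' : HasDerivAt φ' φ'' (g p))
    (v : En n × ℝ) :
    D2 (fun q ↦ φ (g q)) p v = φ' (g p) * D2 g p v + φ'' * fderiv ℝ g p v ^ 2 := by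
  have hfirst : (fun q ↦ fderiv ℝ (fun q ↦ φ (g q)) q v) =ᶠ[𝓝 p]
      fun q ↦ φ' (g q) * fderiv ℝ g q v := by
    filter_upwards [hg.continuousAt.eventually hφ, eventually_differentiableAt hg] with q hφq hgq
    exact congrArg (· v) (hφq.comp_hasFDerivAt q hgq.hasFDerivAt).fderiv
  have hsecond := (hφ'.comp_hasFDerivAt p (hg.differentiableAt (by norm_num)).hasFDerivAt).mul
    (differentiableAt_fderiv_apply hg v).hasFDerivAt
  rw [D2, hfirst.fderiv_eq]
  refine (congrArg (· v) hsecond.fderiv).trans ?_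
  simp only [Function.comp_apply, add_apply, smul_apply, smul_eq_mul, D2]
  ring

lemma aLap_comp {φ φ' : ℝ → ℝ} {φ'' : ℝ} (hg : ContDiffAt ℝ 2 g p)
    (hφ : ∀ᶠ t in 𝓝 (g p), HasDerivAt φ (φ' t) t) (hφ' : HasDerivAt φ' φ'' (g p)) :
    aLap a (fun q ↦ φ (g q)) p = φ' (g p) * aLap a g p + φ'' * gradSq g p := by
  have hfirst : fderiv ℝ (fun q ↦ φ (g q)) p = φ' (g p) • fderiv ℝ g p :=
    (hφ.self_of_nhds.comp_hasFDerivAt p (hg.differentiableAt (by norm_num)).hasFDerivAt).fderiv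
  simp only [aLap, lap, gradSq, D2_comp hg hφ hφ', hfirst, Finset.sum_add_distrib,
    ← Finset.mul_sum, smul_apply, smul_eq_mul]
  ring

lemma aLap_rpow (hg : ContDiffAt ℝ 2 g p) (hgp : g p ≠ 0) (β : ℝ) :
    aLap a (fun q ↦ g q ^ β) p =
      β * g p ^ (β - 1) * aLap a g p + β * (β - 1) * g p ^ (β - 2) * gradSq g p := by
  have hφ : ∀ᶠ t in 𝓝 (g p), HasDerivAt (fun t : ℝ ↦ t ^ β) (β * t ^ (β - 1)) t :=
    (eventually_ne_nhds hgp).mono fun t ht ↦ Real.hasDerivAt_rpow_const (Or.inl ht)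
  have hφ' : HasDerivAt (fun t : ℝ ↦ β * t ^ (β - 1)) (β * ((β - 1) * g p ^ (β - 1 - 1))) (g p) :=
    (Real.hasDerivAt_rpow_const (Or.inl hgp)).const_mul β
  rw [aLap_comp hg hφ hφ', show β - 1 - 1 = β - 2 by ring]
  ring

end Calculus

section MaximumPrinciple

lemma deriv_deriv_nonpos_of_isLocalMax {f : ℝ → ℝ} {x : ℝ} (hf : ContinuousAt f x)
    (hmax : IsLocalMax f x) : deriv (deriv f) x ≤ 0 := by
  by_contra! hpos
  have hmin : IsLocalMin f x := isLocalMin_of_deriv_deriv_pos hpos hmax.deriv_eq_zero hf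
  have hconst : f =ᶠ[𝓝 x] fun _ ↦ f x := by
    filter_upwards [hmax, hmin] with t h₁ h₂ using le_antisymm h₁ h₂
  simp [hconst.deriv.deriv_eq] at hpos

variable {n : ℕ} {a : ℝ} {w φ : En n × ℝ → ℝ} {p : En n × ℝ} {Ω K : Set (En n × ℝ)}

lemma D2_eq_deriv_deriv_line (hw : ContDiffAt ℝ 2 w p) (v : En n × ℝ) :
    D2 w p v = deriv (deriv fun t : ℝ ↦ w (p + t • v)) 0 := by
  have hline (t : ℝ) : HasDerivAt (fun t : ℝ ↦ p + t • v) v t := by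
    simpa using ((hasDerivAt_id t).smul_const v).const_add p
  have htendsto : Tendsto (fun t : ℝ ↦ p + t • v) (𝓝 0) (𝓝 p) := by
    simpa using (hline 0).continuousAt.tendsto
  have hfirst : (deriv fun t : ℝ ↦ w (p + t • v)) =ᶠ[𝓝 0] fun t ↦ fderiv ℝ w (p + t • v) v := by
    filter_upwards [htendsto.eventually (eventually_differentiableAt hw)] with t ht
    exact (ht.hasFDerivAt.comp_hasDerivAt t (hline t)).deriv
  have hsecond : HasFDerivAt (fun q ↦ fderiv ℝ w q v) (fderiv ℝ (fun q ↦ fderiv ℝ w q v) p)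
      (p + (0 : ℝ) • v) := by
    simpa using (differentiableAt_fderiv_apply hw v).hasFDerivAt
  rw [hfirst.deriv_eq]
  exact (hsecond.comp_hasDerivAt 0 (hline 0)).deriv.symm

lemma D2_nonpos_of_isLocalMax (hw : ContDiffAt ℝ 2 w p) (hmax : IsLocalMax w p)
    (v : En n × ℝ) : D2 w p v ≤ 0 := by
  have hline : ContinuousAt (fun t : ℝ ↦ p + t • v) 0 := by fun_prop
  have hzero : p + (0 : ℝ) • v = p := by simp
  rw [D2_eq_deriv_deriv_line hw]
  apply deriv_deriv_nonpos_of_isLocalMax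
  · exact hw.continuousAt.comp_of_eq hline hzero
  · have htendsto : Tendsto (fun t : ℝ ↦ p + t • v) (𝓝 0) (𝓝 p) := by
      simpa using hline.tendsto
    exact IsMaxFilter.comp_tendsto (hzero.symm ▸ hmax) htendsto

lemma aLap_nonpos_of_isLocalMax (hw : ContDiffAt ℝ 2 w p) (hmax : IsLocalMax w p) :
    aLap a w p ≤ 0 := by
  simp only [aLap, lap, hmax.fderiv_eq_zero, zero_apply, mul_zero, add_zero]
  exact add_nonpos (Finset.sum_nonpos fun _ _ ↦ D2_nonpos_of_isLocalMax hw hmax _)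
    (D2_nonpos_of_isLocalMax hw hmax _)

theorem nonpos_of_aLap_pos (hΩ : IsOpen Ω) (hK : IsCompact K) (hΩK : Ω ⊆ K)
    (hwK : ContinuousOn w K) (hwΩ : ∀ p ∈ Ω, ContDiffAt ℝ 2 w p) (hsub : ∀ p ∈ Ω, 0 < aLap a w p)
    (hbdry : ∀ p ∈ K \ Ω, w p ≤ 0) : ∀ p ∈ K, w p ≤ 0 := by
  intro p hp
  obtain ⟨m, hmK, hm⟩ := hK.exists_isMaxOn ⟨p, hp⟩ hwK
  have hmΩ : m ∉ Ω := fun h ↦ (hsub m h).not_ge <|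
    aLap_nonpos_of_isLocalMax (hwΩ m h) (hm.isLocalMax (mem_of_superset (hΩ.mem_nhds h) hΩK))
  exact (hm hp).trans (hbdry m ⟨hmK, hmΩ⟩)

theorem le_const_mul_of_aLap_nonneg_of_aLap_neg (hΩ : IsOpen Ω) (hK : IsCompact K) (hΩK : Ω ⊆ K)
    (hwK : ContinuousOn w K) (hwΩ : ∀ p ∈ Ω, ContDiffAt ℝ 2 w p) (hw : ∀ p ∈ Ω, 0 ≤ aLap a w p)
    (hφK : ContinuousOn φ K) (hφΩ : ∀ p ∈ Ω, ContDiffAt ℝ 2 φ p) (hφ : ∀ p ∈ Ω, aLap a φ p < 0)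
    (hφ₀ : ∀ p ∈ K \ Ω, 0 ≤ φ p) {c : ℝ} (hc : 0 ≤ c) (hbdry : ∀ p ∈ K \ Ω, w p ≤ c * φ p) :
    ∀ p ∈ K, w p ≤ c * φ p := by
  intro p hp
  have hstrict (b : ℝ) (hb : c < b) : w p ≤ b * φ p := by
    have hb₀ : 0 < b := hc.trans_lt hb
    suffices w p + -b * φ p ≤ 0 by linarith
    refine nonpos_of_aLap_pos (a := a) (w := fun q ↦ w q + -b * φ q) hΩ hK hΩK
      (hwK.add (continuousOn_const.mul hφK))
      (fun q hq ↦ (hwΩ q hq).add (contDiffAt_const.mul (hφΩ q hq))) (fun q hq ↦ ?_)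
      (fun q hq ↦ ?_) p hp
    · rw [aLap_add_const_mul (hwΩ q hq) (hφΩ q hq)]
      linarith [hw q hq, mul_pos_of_neg_of_neg (neg_neg_of_pos hb₀) (hφ q hq)]
    · linarith [hbdry q hq, mul_le_mul_of_nonneg_right hb.le (hφ₀ q hq)]
  have hlim : Tendsto (fun b ↦ b * φ p) (𝓝[>] c) (𝓝 (c * φ p)) :=
    (tendsto_id.mul_const _).mono_left nhdsWithin_le_nhds
  exact ge_of_tendsto hlim (eventually_mem_nhdsWithin.mono hstrict)

end MaximumPrinciple

section Barrier

variable {n : ℕ} {a α β : ℝ} {P p : En n × ℝ}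

lemma contDiff_distSq (P : En n × ℝ) : ContDiff ℝ 2 (distSq P) := by
  unfold distSq
  exact ((contDiff_fst.sub contDiff_const).norm_sq ℝ).add ((contDiff_snd.sub contDiff_const).pow 2)

lemma contDiff_tangentDist (P : En n × ℝ) : ContDiff ℝ 2 (tangentDist P) := by
  unfold tangentDist
  exact contDiff_const.sub ((contDiff_fst.inner ℝ contDiff_const).add
    (contDiff_snd.mul contDiff_const))

lemma distSq_nonneg (P p : En n × ℝ) : 0 ≤ distSq P p := by
  unfold distSq
  positivity

lemma distSq_eq (hP : ‖P.1‖ ^ 2 + P.2 ^ 2 = 1) (p : En n × ℝ) :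
    distSq P p = (‖p.1‖ ^ 2 + p.2 ^ 2 - 1) + 2 * tangentDist P p := by
  rw [distSq, tangentDist, norm_sub_sq_real]
  linear_combination hP

lemma tangentDist_pos (hP : ‖P.1‖ ^ 2 + P.2 ^ 2 = 1) (hp : p ∈ halfBall n 1) :
    0 < tangentDist P p := by
  linarith [distSq_eq hP p, distSq_nonneg P p, hp.1]

lemma tangentDist_nonneg (hP : ‖P.1‖ ^ 2 + P.2 ^ 2 = 1) (hp : p ∈ closedHalfBall n 1) :
    0 ≤ tangentDist P p := by
  linarith [distSq_eq hP p, distSq_nonneg P p, hp.1]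

lemma tangentDist_sq_le_distSq (hP : ‖P.1‖ ^ 2 + P.2 ^ 2 = 1) (p : En n × ℝ) :
    tangentDist P p ^ 2 ≤ distSq P p := by
  -- The difference is the squared distance from `P` to the projection of `p` on the tangent plane.
  set d := tangentDist P p with hd
  have hdiff : distSq P p - d ^ 2 =
      ‖p.1 - P.1 + d • P.1‖ ^ 2 + (p.2 - P.2 + d * P.2) ^ 2 := by
    rw [norm_add_sq_real, norm_smul, mul_pow, Real.norm_eq_abs, sq_abs, inner_smul_right,
      inner_sub_left, real_inner_self_eq_norm_sq, distSq]
    rw [tangentDist] at hd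
    linear_combination (2 * d - d ^ 2) * hP - 2 * d * hd
  have hnonneg : 0 ≤ distSq P p - d ^ 2 := hdiff ▸ by positivity
  linarith

lemma fderiv_distSq_apply (P p v : En n × ℝ) :
    fderiv ℝ (distSq P) p v = 2 * (⟪p.1 - P.1, v.1⟫ + (p.2 - P.2) * v.2) := by
  have h := ((hasFDerivAt_fst (𝕜 := ℝ) (p := p)).sub_const P.1).norm_sq.add
    (((hasFDerivAt_snd (𝕜 := ℝ) (p := p)).sub_const P.2).pow 2)
  refine (congrArg (· v) h.fderiv).trans ?_
  simp only [map_sub, ContinuousLinearMap.sub_comp, Nat.add_one_sub_one, pow_one, nsmul_eq_mul,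
    Nat.cast_ofNat, add_apply, smul_apply, sub_apply, ContinuousLinearMap.comp_apply,
    ContinuousLinearMap.coe_fst', coe_innerSL_apply, ContinuousLinearMap.coe_snd', smul_eq_mul,
    inner_sub_left]
  ring

lemma D2_distSq (P p v : En n × ℝ) : D2 (distSq P) p v = 2 * (‖v.1‖ ^ 2 + v.2 ^ 2) := by
  have h := ((((hasFDerivAt_fst (𝕜 := ℝ) (p := p)).sub_const P.1).inner ℝ
    (hasFDerivAt_const v.1 p)).add
      (((hasFDerivAt_snd (𝕜 := ℝ) (p := p)).sub_const P.2).mul_const v.2)).const_mul 2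
  simp only [D2, fderiv_distSq_apply]
  refine (congrArg (· v) h.fderiv).trans ?_
  simp only [smul_add, add_apply, smul_apply, ContinuousLinearMap.comp_apply,
    ContinuousLinearMap.prod_apply, ContinuousLinearMap.coe_fst', zero_apply,
    fderivInnerCLM_apply, inner_zero_right, real_inner_self_eq_norm_sq, zero_add, smul_eq_mul,
    ContinuousLinearMap.coe_snd']
  ring

lemma aLap_distSq (a : ℝ) (P p : En n × ℝ) :
    aLap a (distSq P) p = 2 * (n + 1) + a / p.2 * (2 * (p.2 - P.2)) := by
  simp only [aLap, lap, D2_distSq, fderiv_distSq_apply, PiLp.norm_single, norm_one, norm_zero,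
    one_pow, zero_pow two_ne_zero, inner_zero_right, Finset.sum_const, Finset.card_univ,
    Fintype.card_fin, nsmul_eq_mul]
  ring

lemma gradSq_distSq (P p : En n × ℝ) : gradSq (distSq P) p = 4 * distSq P p := by
  simp only [gradSq, fderiv_distSq_apply, distSq, EuclideanSpace.real_norm_sq_eq]
  simp only [EuclideanSpace.inner_single_right, PiLp.sub_apply, Real.ringHom_apply, one_mul,
    mul_zero, add_zero, mul_pow, ← Finset.mul_sum, inner_zero_right, mul_one, zero_add]
  ring

lemma fderiv_tangentDist_apply (P p v : En n × ℝ) :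
    fderiv ℝ (tangentDist P) p v = -(⟪v.1, P.1⟫ + v.2 * P.2) := by
  have h := (((hasFDerivAt_fst (𝕜 := ℝ) (p := p)).inner ℝ (hasFDerivAt_const P.1 p)).add
    ((hasFDerivAt_snd (𝕜 := ℝ) (p := p)).mul_const P.2)).const_sub 1
  refine (congrArg (· v) h.fderiv).trans ?_
  simp only [neg_add_rev, add_apply, neg_apply, smul_apply, ContinuousLinearMap.coe_snd',
    smul_eq_mul, ContinuousLinearMap.comp_apply, ContinuousLinearMap.prod_apply,
    ContinuousLinearMap.coe_fst', zero_apply, fderivInnerCLM_apply, inner_zero_right, zero_add]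
  ring

lemma aLap_tangentDist (a : ℝ) (P p : En n × ℝ) :
    aLap a (tangentDist P) p = -(a / p.2 * P.2) := by
  simp [aLap, lap, D2, fderiv_tangentDist_apply]

lemma gradSq_tangentDist (P p : En n × ℝ) :
    gradSq (tangentDist P) p = ‖P.1‖ ^ 2 + P.2 ^ 2 := by
  simp [gradSq, fderiv_tangentDist_apply, EuclideanSpace.inner_single_left,
    EuclideanSpace.real_norm_sq_eq]

lemma aLap_distSq_rpow_le (ha : 0 ≤ a) (hβ : 0 ≤ β) (hP : 0 ≤ P.2) (hp : 0 < p.2)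
    (hd : 0 < distSq P p) :
    aLap a (fun q ↦ distSq P q ^ β) p ≤ 2 * β * (n + a + 2 * β - 1) * distSq P p ^ (β - 1) := by
  have hpow : distSq P p ^ (β - 2) * distSq P p = distSq P p ^ (β - 1) := by
    rw [← Real.rpow_add_one hd.ne']
    ring_nf
  have hdrift : a / p.2 * (2 * (p.2 - P.2)) ≤ 2 * a :=
    calc a / p.2 * (2 * (p.2 - P.2)) = 2 * a - 2 * (a / p.2 * P.2) := by field_simp
      _ ≤ 2 * a := by linarith [mul_nonneg (div_nonneg ha hp.le) hP]
  rw [aLap_rpow (contDiff_distSq P).contDiffAt hd.ne', aLap_distSq, gradSq_distSq]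
  calc _ = β * distSq P p ^ (β - 1) *
        (2 * (n + 1) + a / p.2 * (2 * (p.2 - P.2)) + 4 * (β - 1)) := by
        linear_combination 4 * β * (β - 1) * hpow
    _ ≤ β * distSq P p ^ (β - 1) * (2 * (n + 1) + 2 * a + 4 * (β - 1)) := by gcongr
    _ = _ := by ring

lemma aLap_tangentDist_rpow_le (ha : 0 ≤ a) (hβ : 0 ≤ β) (hP : 0 ≤ P.2) (hp : 0 < p.2)
    (hd : 0 < tangentDist P p) :
    aLap a (fun q ↦ tangentDist P q ^ β) p ≤
      β * (β - 1) * tangentDist P p ^ (β - 2) * (‖P.1‖ ^ 2 + P.2 ^ 2) := by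
  rw [aLap_rpow (contDiff_tangentDist P).contDiffAt hd.ne', aLap_tangentDist, gradSq_tangentDist]
  have hdrift : 0 ≤ β * tangentDist P p ^ (β - 1) * (a / p.2 * P.2) := by positivity
  linarith

lemma continuous_barrier (hα : 0 ≤ α) (P : En n × ℝ) : Continuous (barrier a α P) :=
  ((contDiff_distSq P).continuous.rpow_const fun _ ↦ Or.inr (by positivity)).add
    (continuous_const.mul ((contDiff_tangentDist P).continuous.rpow_const fun _ ↦ Or.inr hα))

lemma distSq_pos (hP : ‖P.1‖ ^ 2 + P.2 ^ 2 = 1) (hp : p ∈ halfBall n 1) : 0 < distSq P p :=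
  (pow_pos (tangentDist_pos hP hp) 2).trans_le (tangentDist_sq_le_distSq hP p)

lemma contDiffAt_distSq_rpow (hd : distSq P p ≠ 0) :
    ContDiffAt ℝ 2 (fun q ↦ distSq P q ^ β) p :=
  (contDiff_distSq P).contDiffAt.rpow_const_of_ne hd

lemma contDiffAt_tangentDist_rpow (hd : tangentDist P p ≠ 0) :
    ContDiffAt ℝ 2 (fun q ↦ tangentDist P q ^ β) p :=
  (contDiff_tangentDist P).contDiffAt.rpow_const_of_ne hd

lemma contDiffAt_barrier (hP : ‖P.1‖ ^ 2 + P.2 ^ 2 = 1) (hp : p ∈ halfBall n 1) :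
    ContDiffAt ℝ 2 (barrier a α P) p :=
  (contDiffAt_distSq_rpow (distSq_pos hP hp).ne').add
    (contDiffAt_const.mul (contDiffAt_tangentDist_rpow (tangentDist_pos hP hp).ne'))

lemma aLap_barrier_neg (ha : 0 ≤ a) (hα : α ∈ Ioo 0 1) (hP : P ∈ closedSpherePlus n)
    (hp : p ∈ halfBall n 1) : aLap a (barrier a α P) p < 0 := by
  have ⟨hα₀, hα₁⟩ := hα
  have h1α : 0 < 1 - α := sub_pos.2 hα₁
  have hd := tangentDist_pos hP.1 hp
  have hR := distSq_pos hP.1 hp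
  set X := distSq P p ^ (α / 2 - 1)
  set Y := tangentDist P p ^ (α - 2) with hY
  have hXY : X ≤ Y :=
    calc X ≤ (tangentDist P p ^ 2) ^ (α / 2 - 1) :=
          Real.rpow_le_rpow_of_nonpos (pow_pos hd 2) (tangentDist_sq_le_distSq hP.1 p)
            (by linarith)
      _ = Y := by
          rw [hY, ← Real.rpow_natCast_mul hd.le]
          push_cast
          ring_nf
  have hX₀ : 0 < X := Real.rpow_pos_of_pos hR _
  have hdist := aLap_distSq_rpow_le ha (half_pos hα₀).le hP.2 hp.2 hR
  have htangent := aLap_tangentDist_rpow_le ha hα₀.le hP.2 hp.2 hd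
  rw [hP.1, mul_one] at htangent
  calc aLap a (barrier a α P) p
      = aLap a (fun q ↦ distSq P q ^ (α / 2)) p +
          (n + a) / (1 - α) * aLap a (fun q ↦ tangentDist P q ^ α) p :=
        aLap_add_const_mul (contDiffAt_distSq_rpow hR.ne') (contDiffAt_tangentDist_rpow hd.ne') _
    _ ≤ 2 * (α / 2) * (n + a + 2 * (α / 2) - 1) * X +
          (n + a) / (1 - α) * (α * (α - 1) * Y) := by gcongr
    _ = -(α * (1 - α) * X) - α * (n + a) * (Y - X) := by
        field_simp
        ring
    _ < 0 := by
        have : 0 ≤ α * (n + a) * (Y - X) :=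
          mul_nonneg (by positivity) (sub_nonneg.2 hXY)
        linarith [mul_pos (mul_pos hα₀ h1α) hX₀]

lemma distSq_rpow_le_barrier (ha : 0 ≤ a) (hα : α < 1) (hP : ‖P.1‖ ^ 2 + P.2 ^ 2 = 1)
    (hp : p ∈ closedHalfBall n 1) :
    distSq P p ^ (α / 2) ≤ barrier a α P p :=
  le_add_of_nonneg_right <| mul_nonneg (div_nonneg (by positivity) (sub_nonneg.2 hα.le))
    (Real.rpow_nonneg (tangentDist_nonneg hP hp) _)

lemma barrier_le (ha : 0 ≤ a) (hα : α ∈ Ico 0 1) (hP : ‖P.1‖ ^ 2 + P.2 ^ 2 = 1)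
    (hp : p ∈ closedHalfBall n 1) :
    barrier a α P p ≤ (1 + (n + a) / (1 - α)) * distSq P p ^ (α / 2) := by
  have hpow : tangentDist P p ^ α ≤ distSq P p ^ (α / 2) :=
    calc tangentDist P p ^ α = (tangentDist P p ^ 2) ^ (α / 2) := by
          rw [← Real.rpow_natCast_mul (tangentDist_nonneg hP hp)]
          push_cast
          ring_nf
      _ ≤ distSq P p ^ (α / 2) :=
          Real.rpow_le_rpow (sq_nonneg _) (tangentDist_sq_le_distSq hP p)
            (div_nonneg hα.1 zero_le_two)
  have hM : 0 ≤ (n + a) / (1 - α) := div_nonneg (by positivity) (sub_nonneg.2 hα.2.le)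
  rw [one_add_mul, barrier]
  gcongr

end Barrier

section BoundaryEstimate

variable {n : ℕ} {a α C₀ : ℝ} {P : En n × ℝ}

theorem le_distSq_rpow_of_aLap_nonneg {w : En n × ℝ → ℝ} (ha : 0 ≤ a) (hα : α ∈ Ioo 0 1)
    (hC₀ : 0 ≤ C₀) (hP : P ∈ closedSpherePlus n) (hwc : ContinuousOn w (closedHalfBall n 1))
    (hw2 : ContDiffOn ℝ 2 w (halfBall n 1)) (hw : ∀ p ∈ halfBall n 1, 0 ≤ aLap a w p)
    (hbdry : ∀ p ∈ flatBall n 1 ×ˢ {0} ∪ spherePlus n, w p ≤ C₀ * distSq P p ^ (α / 2)) :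
    ∀ p ∈ closedHalfBall n 1,
      w p ≤ (1 + (n + a) / (1 - α)) * C₀ * distSq P p ^ (α / 2) := by
  have hcont : Continuous fun p ↦ C₀ * distSq P p ^ (α / 2) := continuous_const.mul
    ((contDiff_distSq P).continuous.rpow_const fun _ ↦ Or.inr (half_pos hα.1).le)
  have hrim : ∀ p ∈ closedHalfBall n 1 \ halfBall n 1, w p ≤ C₀ * distSq P p ^ (α / 2) :=
    fun p hp ↦ le_on_closure hbdry (hwc.mono closure_flatBall_prod_union_spherePlus_subset)
      hcont.continuousOn (closedHalfBall_diff_halfBall_subset_closure hp)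
  have hdist {p} (hp : p ∈ closedHalfBall n 1) := distSq_rpow_le_barrier ha hα.2 hP.1 hp
  intro p hp
  calc w p ≤ C₀ * barrier a α P p :=
        le_const_mul_of_aLap_nonneg_of_aLap_neg (isOpen_halfBall 1) (isCompact_closedHalfBall 1)
          (halfBall_subset_closedHalfBall 1) hwc
          (fun q hq ↦ hw2.contDiffAt ((isOpen_halfBall 1).mem_nhds hq)) hw
          (continuous_barrier hα.1.le P).continuousOn (fun _ ↦ contDiffAt_barrier hP.1)
          (fun _ ↦ aLap_barrier_neg ha hα hP)
          (fun q hq ↦ (Real.rpow_nonneg (distSq_nonneg P q) _).trans (hdist hq.1)) hC₀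
          (fun q hq ↦ (hrim q hq).trans (mul_le_mul_of_nonneg_left (hdist hq.1) hC₀)) p hp
    _ ≤ C₀ * ((1 + (n + a) / (1 - α)) * distSq P p ^ (α / 2)) :=
        mul_le_mul_of_nonneg_left (barrier_le ha (Ioo_subset_Ico_self hα) hP.1 hp) hC₀
    _ = _ := by ring

theorem boundary_continuity_lateral_general {u : En n × ℝ → ℝ} (ha : 0 ≤ a) (hα : α ∈ Ioo 0 1)
    (hP : P ∈ closedSpherePlus n) (huc : ContinuousOn u (closedHalfBall n 1))
    (hu : IsAHarmonicOn a u (halfBall n 1))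
    (hbdry : ∀ p ∈ flatBall n 1 ×ˢ {0} ∪ spherePlus n,
      |u P - u p| ≤ C₀ * distSq P p ^ (α / 2)) :
    ∀ p ∈ closedHalfBall n 1,
      |u P - u p| ≤ (1 + (n + a) / (1 - α)) * C₀ * distSq P p ^ (α / 2) := by
  have hC₀ : 0 ≤ C₀ := by
    have horigin := (abs_nonneg _).trans (hbdry 0 (Or.inl ⟨by simp [flatBall], rfl⟩))
    simpa [distSq, hP.1] using horigin
  have hLu : ∀ p ∈ halfBall n 1, aLap a u p = 0 := hu.2
  intro p hp
  refine abs_sub_le_iff.2 ⟨?_, ?_⟩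
  · exact le_distSq_rpow_of_aLap_nonneg (w := fun q ↦ u P - u q) ha hα hC₀ hP
      (continuousOn_const.sub huc) (contDiffOn_const.sub hu.1)
      (fun q hq ↦ by rw [aLap_const_sub, hLu q hq, neg_zero])
      (fun q hq ↦ (abs_sub_le_iff.1 (hbdry q hq)).1) p hp
  · exact le_distSq_rpow_of_aLap_nonneg (w := fun q ↦ u q - u P) ha hα hC₀ hP
      (huc.sub continuousOn_const) (hu.1.sub contDiffOn_const)
      (fun q hq ↦ by rw [aLap_sub_const, hLu q hq])
      (fun q hq ↦ (abs_sub_le_iff.1 (hbdry q hq)).2) p hp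

end BoundaryEstimate

/-- **Lemma 4.2 (continuity on `(∂B_1)^+`).** If `u` is `a`-harmonic in `B_1^+` and at a
point `(x₀, y₀) ∈ (∂B_1)^+` the boundary values separate at most like
`C₀ (|x-x₀|² + (y-y₀)²)^{α/2}` on `∂B_1^+`, then the same modulus (up to a constant
depending only on `s`, `n` and `α`) holds in all of `B_1^+` (here `a = 1-2s`). -/
theorem boundary_continuity_lateral (n : ℕ) (hn : 1 ≤ n) (s : ℝ)
    (hs : s ∈ Ioo (0 : ℝ) (1/2)) (α : ℝ) (hα : α ∈ Ioo (0 : ℝ) 1) :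
    ∃ C > 0, ∀ (u : En n × ℝ → ℝ) (x₀ : En n) (y₀ : ℝ) (C₀ : ℝ),
      ContinuousOn u (closedHalfBall n 1) →
      IsAHarmonicOn (1 - 2*s) u (halfBall n 1) →
      ‖x₀‖^2 + y₀^2 = 1 → 0 < y₀ → 0 ≤ C₀ →
      (∀ p : En n × ℝ, (‖p.1‖^2 < 1 ∧ p.2 = 0) ∨ p ∈ spherePlus n →
        |u (x₀, y₀) - u p| ≤ C₀ * (‖p.1 - x₀‖^2 + (p.2 - y₀)^2) ^ (α/2)) →
      ∀ p ∈ halfBall n 1,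
        |u (x₀, y₀) - u p| ≤ C * C₀ * (‖p.1 - x₀‖^2 + (p.2 - y₀)^2) ^ (α/2) := by
  have ha : 0 ≤ 1 - 2 * s := by linarith [hs.2]
  have h1α : 0 < 1 - α := sub_pos.2 hα.2
  refine ⟨1 + (n + (1 - 2 * s)) / (1 - α), by positivity, ?_⟩
  intro u x₀ y₀ C₀ huc hu hP hy₀ _ hbdry p hp
  refine boundary_continuity_lateral_general ha hα (P := (x₀, y₀)) ⟨hP, hy₀.le⟩ huc hu ?_ p
    (halfBall_subset_closedHalfBall 1 hp)
  rintro q (⟨hx, hy⟩ | hq)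
  · exact hbdry q (Or.inl ⟨(sq_lt_one_iff₀ (norm_nonneg _)).2 hx, hy⟩)
  · exact hbdry q (Or.inr hq)

end
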